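/- arXiv:2006.16569 — 2 statements merged into one kernel-verified Lean document; each statement's English description precedes it below -/
import Mathlib

section
/- Fix q ∈ (0,1). The function h : p ↦ kl(p, q)/(q − p) is nonincreasing on the interval [0, q). -/
/-!
The map `p ↦ klBern p q` is convex on `[0, 1]`, being the negative of the (concave) binary entropy
plus an affine function of `p`, and it vanishes at `p = q`. Hence `-klBern p q / (q - p)` is the
slope of the secant of a convex function through the fixed point `q`, which is nondecreasing in `p`.
-/

/-- Bernoulli Kullback–Leibler divergence
`kl(p,q) = p·log(p/q) + (1−p)·log((1−p)/(1−q))`,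
with the convention `0·log 0 = 0` (automatic since `Real.log 0 = 0`). -/
noncomputable def klBern (p q : ℝ) : ℝ :=
  p * Real.log (p / q) + (1 - p) * Real.log ((1 - p) / (1 - q))

/-- Rewriting in terms of the binary entropy; valid at all real `p` because `0 * log 0 = 0`. -/
lemma klBern_eq_neg_binEntropy_add {p q : ℝ} (hq0 : 0 < q) (hq1 : q < 1) :
    klBern p q = -Real.binEntropy p + (p * (-Real.log q) + (1 - p) * (-Real.log (1 - q))) := by
  have key : ∀ {x y : ℝ}, 0 < y → x * Real.log (x / y) = x * Real.log x - x * Real.log y := by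
    intro x y hy
    rcases eq_or_ne x 0 with rfl | hx
    · simp
    · rw [Real.log_div hx hy.ne']; ring
  rw [klBern, key hq0, key (sub_pos.2 hq1), Real.binEntropy, Real.log_inv, Real.log_inv]
  ring

lemma convexOn_klBern {q : ℝ} (hq0 : 0 < q) (hq1 : q < 1) :
    ConvexOn ℝ (Set.Icc 0 1) (fun p => klBern p q) := by
  have haff : ∀ a b : ℝ, ConvexOn ℝ (Set.Icc (0 : ℝ) 1) (fun p => p * a + (1 - p) * b) := by
    refine fun a b => ⟨convex_Icc 0 1, fun x _ y _ s t _ _ hst => le_of_eq ?_⟩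
    obtain rfl : t = 1 - s := by linarith
    simp only [smul_eq_mul]
    ring
  simp only [klBern_eq_neg_binEntropy_add hq0 hq1]
  exact Real.strictConcave_binEntropy.concaveOn.neg.add (haff _ _)

lemma klBern_self {q : ℝ} (hq0 : 0 < q) (hq1 : q < 1) : klBern q q = 0 := by
  simp [klBern, div_self hq0.ne', div_self (sub_pos.2 hq1).ne']

/-- For fixed `q ∈ (0,1)`, the map `p ↦ kl(p,q)/(q − p)` is nonincreasing
on `[0, q)`. -/
theorem kl_div_gap_antitoneOn (q : ℝ) (hq0 : 0 < q) (hq1 : q < 1) :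
    AntitoneOn (fun p => klBern p q / (q - p)) (Set.Ico 0 q) := by
  rintro x ⟨hx0, hxq⟩ y ⟨hy0, hyq⟩ hxy
  have h := (convexOn_klBern hq0 hq1).secant_mono (a := q) ⟨hq0.le, hq1.le⟩
    ⟨hx0, (hxq.trans hq1).le⟩ ⟨hy0, (hyq.trans hq1).le⟩ hxq.ne hyq.ne hxy
  simp only [klBern_self hq0 hq1, sub_zero] at h
  rw [← neg_sub q x, ← neg_sub q y, div_neg, div_neg] at h
  exact neg_le_neg_iff.1 h
end

section
/- (Deterministic core of the KLUCB-UB empirical lower bound, Case 2.) Let x, y, z, u be reals with 0 ≤ x ≤ y ≤ z ≤ u < 1, and let N, N' be reals with N ≥ 1 and N' ≥ 1. Assume N'·kl(y, u) ≤ N·kl(x, u) + log N. Then N'·kl(y, z) ≤ N·kl(x, z) + log N. -/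
/-- The logarithms of the quotients split also at `p = 0`, where the term `p·log(p/q)` vanishes. -/
lemma klBern_expand {p q : ℝ} (hp : 0 ≤ p) (hp1 : p < 1) (hq : 0 < q) (hq1 : q < 1) :
    klBern p q = p * Real.log p + (1 - p) * Real.log (1 - p)
      - p * Real.log q - (1 - p) * Real.log (1 - q) := by
  unfold klBern
  rw [Real.log_div (by linarith : (1 - p) ≠ 0) (by linarith : (1 - q) ≠ 0)]
  rcases hp.eq_or_lt with rfl | hp
  · simp
  · rw [Real.log_div hp.ne' hq.ne']
    ring

lemma klBern_self_s17 {p : ℝ} (hp : 0 ≤ p) (hp1 : p < 1) : klBern p p = 0 := by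
  unfold klBern
  rw [div_self (by linarith : (1 - p) ≠ 0)]
  rcases hp.eq_or_lt with rfl | hp
  · simp
  · simp [div_self hp.ne']

/-- Gibbs' inequality, from `log t ≤ t − 1`. -/
lemma klBern_nonneg {p q : ℝ} (hp : 0 ≤ p) (hp1 : p < 1) (hq : 0 < q) (hq1 : q < 1) :
    0 ≤ klBern p q := by
  have key : ∀ s t : ℝ, 0 ≤ s → 0 < t → s - t ≤ s * Real.log (s / t) := by
    intro s t hs ht
    rcases hs.eq_or_lt with rfl | hs
    · simp [ht.le]
    · have h1 := Real.one_sub_inv_le_log_of_pos (div_pos hs ht)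
      have h2 := mul_le_mul_of_nonneg_left h1 hs.le
      have h3 : s * (1 - (s / t)⁻¹) = s - t := by field_simp
      linarith
  have h1 := key p q hp hq
  have h2 := key (1 - p) (1 - q) (by linarith) (by linarith)
  unfold klBern
  linarith

/-- Follows from the three-point identity
`kl(x,z) = kl(x,y) + kl(y,z) + (y − x)·(logit z − logit y)`. -/
lemma klBern_anti_left {x y z : ℝ} (hx : 0 ≤ x) (hxy : x ≤ y) (hyz : y ≤ z) (hz : z < 1) :
    klBern y z ≤ klBern x z := by
  rcases hxy.eq_or_lt with rfl | hlt
  · exact le_rfl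
  have hy : 0 < y := by linarith
  have h0 := klBern_nonneg hx (by linarith) hy (by linarith)
  rw [klBern_expand hx (by linarith) hy (by linarith)] at h0
  rw [klBern_expand hx (by linarith) (by linarith) hz,
    klBern_expand hy.le (by linarith) (by linarith) hz]
  have h1 : Real.log y ≤ Real.log z := Real.log_le_log hy hyz
  have h2 : Real.log (1 - z) ≤ Real.log (1 - y) := Real.log_le_log (by linarith) (by linarith)
  have h3 : 0 ≤ (y - x) * ((Real.log z - Real.log y) + (Real.log (1 - y) - Real.log (1 - z))) :=
    mul_nonneg (by linarith) (by linarith)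
  linarith

/-- The function `q ↦ −a·log q − b·log (1−q)` has derivative of the sign of `(a+b)q − a`. If this
is nonnegative at `p` and `a + b ≥ 0`, it stays nonnegative to the right of `p`. -/
lemma logCombo_mono {a b p q : ℝ} (hp : 0 < p) (hpq : p ≤ q) (hq : q < 1)
    (hab : 0 ≤ a + b) (h : a ≤ (a + b) * p) :
    -a * Real.log p - b * Real.log (1 - p) ≤ -a * Real.log q - b * Real.log (1 - q) := by
  have h1 : Real.log p ≤ Real.log q := Real.log_le_log hp hpq
  have h2 : Real.log (1 - q) ≤ Real.log (1 - p) := Real.log_le_log (by linarith) (by linarith)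
  have hb : 0 ≤ b := by nlinarith
  rcases le_total a 0 with ha | ha
  · nlinarith
  · -- Since `b·p ≥ a·(1−p)`, `p` times the increment is at least `a·kl(p,q) ≥ 0`.
    have hk := klBern_nonneg hp.le (by linarith) (hp.trans_le hpq) hq
    rw [klBern_expand hp.le (by linarith) (hp.trans_le hpq) hq] at hk
    have h3 := mul_nonneg ha hk
    have h4 : 0 ≤ (b * p - a * (1 - p)) * (Real.log (1 - p) - Real.log (1 - q)) :=
      mul_nonneg (by linarith) (by linarith)
    refine le_of_mul_le_mul_left ?_ hp
    linarith

/-- Deterministic core of the KLUCB-UB empirical lower bound (Case 2):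
for `0 ≤ x ≤ y ≤ z ≤ u < 1` and reals `N, N' ≥ 1`, if
`N'·kl(y,u) ≤ N·kl(x,u) + log N`, then `N'·kl(y,z) ≤ N·kl(x,z) + log N`. -/
theorem klucb_case2_core (x y z u : ℝ) (hx : 0 ≤ x) (hxy : x ≤ y)
    (hyz : y ≤ z) (hzu : z ≤ u) (hu : u < 1)
    (N N' : ℝ) (hN : 1 ≤ N) (hN' : 1 ≤ N')
    (h : N' * klBern y u ≤ N * klBern x u + Real.log N) :
    N' * klBern y z ≤ N * klBern x z + Real.log N := by
  have hlog : 0 ≤ Real.log N := Real.log_nonneg hN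
  have hy0 : 0 ≤ y := hx.trans hxy
  rcases (hy0.trans hyz).eq_or_lt with hz0 | hz
  · -- At `z = 0` all three means coincide and both divergences vanish.
    obtain rfl : x = z := by linarith
    obtain rfl : y = x := by linarith
    simpa [klBern_self_s17 hy0 (by linarith : y < 1)] using hlog
  have hz1 : z < 1 := by linarith
  rcases le_or_gt N' N with hle | hlt
  · have h1 := klBern_anti_left hx hxy hyz hz1
    have h2 := klBern_nonneg hy0 (by linarith) hz hz1
    nlinarith
  set a := N' * y - N * x with ha
  set b := N' * (1 - y) - N * (1 - x) with hb
  have hab : a + b = N' - N := by rw [ha, hb]; ring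
  rcases le_total a ((a + b) * z) with hs | hs
  · have hm := logCombo_mono hz hzu hu (by linarith) hs
    rw [klBern_expand hx (by linarith) (by linarith) hu,
      klBern_expand hy0 (by linarith) (by linarith) hu] at h
    rw [klBern_expand hx (by linarith) hz hz1, klBern_expand hy0 (by linarith) hz hz1]
    rw [ha, hb] at hm
    linarith
  · -- Positivity of `y` keeps `log y` meaningful: `y = 0` would force `a = 0 < (N' − N)·z`.
    have hy : 0 < y := by
      have : 0 < (a + b) * z := mul_pos (by linarith) hz
      nlinarith
    have hm := logCombo_mono (a := b) (b := a) (p := 1 - z) (q := 1 - y)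
      (by linarith) (by linarith) (by linarith) (by linarith) (by linarith)
    simp only [sub_sub_cancel] at hm
    have hk := mul_nonneg (by linarith : 0 ≤ N) (klBern_nonneg hx (by linarith) hy (by linarith))
    rw [klBern_expand hx (by linarith) hy (by linarith)] at hk
    rw [klBern_expand hx (by linarith) hz hz1, klBern_expand hy0 (by linarith) hz hz1]
    rw [ha, hb] at hm
    linarith
end
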